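/- The graphs G_k have unbounded clique-width: for every natural number r there exists k ≥ 1 such that the clique-width of G_k is strictly greater than r. -/

import Mathlib

/-- The recursively defined vertex sets `S(i,j)`:
`S(0,j) = {2j}` and `S(i+1,m) = S(i,3m) ∪ S(i,3m+1)`. -/
def Sset : ℕ → ℕ → Finset ℕ
  | 0, j => {2 * j}
  | i + 1, m => Sset i (3 * m) ∪ Sset i (3 * m + 1)

/-- The graph `G_k` on the vertex set `{0, 1, …, 3^k − 1}` (encoded as `Fin (3^k)`):
its edges are (a) `{m, m+1}` for `0 ≤ m ≤ 3^k − 2`, and (b) `{u, v}` for every level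
`0 ≤ i ≤ k−1`, every `j` with `0 ≤ j < (3^(k−i) + 1)/2 − 1`, every `u ∈ S(i,j)` and
every `v ∈ S(i,j+1)`. -/
def Gk (k : ℕ) : SimpleGraph (Fin (3 ^ k)) :=
  SimpleGraph.fromRel fun u v =>
    ((u : ℕ) + 1 = (v : ℕ)) ∨
    ∃ i < k, ∃ j : ℕ, j + 1 < (3 ^ (k - i) + 1) / 2 ∧
      (u : ℕ) ∈ Sset i j ∧ (v : ℕ) ∈ Sset i (j + 1)

/-- Clique-width expressions over `c` labels: create a single labelled vertex,
take a disjoint union, relabel all vertices of one label to another label, or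
join all pairs consisting of a vertex of one label and one of another label. -/
inductive CW (c : ℕ) : Type where
  | single : Fin c → CW c
  | union : CW c → CW c → CW c
  | relabel : Fin c → Fin c → CW c → CW c
  | join : Fin c → Fin c → CW c → CW c

/-- The vertex type of the labelled graph built by a clique-width expression. -/
def CW.Vt {c : ℕ} : CW c → Type
  | .single _ => Unit
  | .union a b => a.Vt ⊕ b.Vt
  | .relabel _ _ a => a.Vt
  | .join _ _ a => a.Vt

/-- The labelling of the labelled graph built by a clique-width expression. -/
def CW.label {c : ℕ} : (e : CW c) → e.Vt → Fin c
  | .single l, _ => l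
  | .union a _, Sum.inl v => a.label v
  | .union _ b, Sum.inr v => b.label v
  | .relabel x y a, v => if a.label v = x then y else a.label v
  | .join _ _ a, v => a.label v

/-- The adjacency relation of the labelled graph built by a clique-width
expression; the join operation applies only to two *distinct* labels. -/
def CW.adj {c : ℕ} : (e : CW c) → e.Vt → e.Vt → Prop
  | .single _, _, _ => False
  | .union a _, Sum.inl u, Sum.inl v => a.adj u v
  | .union _ b, Sum.inr u, Sum.inr v => b.adj u v
  | .union _ _, Sum.inl _, Sum.inr _ => False
  | .union _ _, Sum.inr _, Sum.inl _ => False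
  | .relabel _ _ a, u, v => a.adj u v
  | .join x y a, u, v =>
      a.adj u v ∨ (x ≠ y ∧ ((a.label u = x ∧ a.label v = y) ∨
        (a.label u = y ∧ a.label v = x)))

/-- The clique-width of a graph `G`: the minimum number `c` of labels for which
some clique-width expression over `c` labels builds a labelled graph whose
underlying graph is isomorphic to `G`. -/
noncomputable def cliqueWidth {V : Type*} (G : SimpleGraph V) : ℕ :=
  sInf {c : ℕ | ∃ (e : CW c) (φ : V ≃ e.Vt),
    ∀ u v : V, G.Adj u v ↔ e.adj (φ u) (φ v)}


section helpers

theorem Sset_even : ∀ (i j y : ℕ), y ∈ Sset i j → y % 2 = 0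
  | 0, j, y, h => by simp [Sset] at h; omega
  | i + 1, j, y, h => by
    simp only [Sset, Finset.mem_union] at h
    rcases h with h | h
    · exact Sset_even i _ y h
    · exact Sset_even i _ y h

theorem Sset_bounds : ∀ (i j x : ℕ), 2 * x ∈ Sset i j → 3 ^ i * j ≤ x ∧ x < 3 ^ i * (j + 1)
  | 0, j, x, h => by simp [Sset] at h; simp; omega
  | i + 1, j, x, h => by
    simp only [Sset, Finset.mem_union] at h
    have e : 3 ^ (i + 1) * j = 3 ^ i * (3 * j) := by ring
    have e2 : 3 ^ (i + 1) * (j + 1) = 3 ^ i * (3 * j) + 3 * 3 ^ i := by ring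
    have hp : 0 < 3 ^ i := by positivity
    rcases h with h | h
    · have := Sset_bounds i _ x h
      have e3 : 3 ^ i * (3 * j + 1) = 3 ^ i * (3 * j) + 3 ^ i := by ring
      omega
    · have := Sset_bounds i _ x h
      have e3 : 3 ^ i * (3 * j + 1) = 3 ^ i * (3 * j) + 3 ^ i := by ring
      have e4 : 3 ^ i * (3 * j + 1 + 1) = 3 ^ i * (3 * j) + 2 * 3 ^ i := by ring
      omega

theorem Sset_down : ∀ (l d j x : ℕ), 2 * x ∈ Sset (l + d + 1) j →
    ∃ b, b % 3 ≠ 2 ∧ 2 * x ∈ Sset l b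
  | l, 0, j, x, h => by
    simp only [Sset, Finset.mem_union] at h
    rcases h with h | h
    · exact ⟨_, by omega, h⟩
    · exact ⟨_, by omega, h⟩
  | l, d + 1, j, x, h => by
    have h' : 2 * x ∈ Sset ((l + d + 1) + 1) j := h
    rw [Sset, Finset.mem_union] at h'
    rcases h' with h | h
    · exact Sset_down l d _ x h
    · exact Sset_down l d _ x h

theorem Sset_inj (i a b x : ℕ) (h : 2 * x ∈ Sset i a) (h' : 2 * x ∈ Sset i b) : a = b := by
  have h1 := Sset_bounds i a x h
  have h2 := Sset_bounds i b x h'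
  have p1 := lt_of_le_of_lt h1.1 h2.2
  have p2 := lt_of_le_of_lt h2.1 h1.2
  have p3 := Nat.lt_of_mul_lt_mul_left p1
  have p4 := Nat.lt_of_mul_lt_mul_left p2
  omega

theorem Sset_base : ∀ (i m : ℕ), 2 * (3 ^ i * m) ∈ Sset i m
  | 0, m => by simp [Sset]
  | i + 1, m => by
    simp only [Sset, Finset.mem_union]
    left
    have := Sset_base i (3 * m)
    have e : 3 ^ (i + 1) * m = 3 ^ i * (3 * m) := by ring
    rw [e]; exact this

theorem Sset_base1 (i m : ℕ) : 2 * (3 ^ i * (3 * m + 1)) ∈ Sset (i + 1) m := by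
  simp only [Sset, Finset.mem_union]
  right
  exact Sset_base i _

theorem Sset_base2 (i m : ℕ) : 2 * (3 ^ i * (3 * (3 * m + 1) + 1)) ∈ Sset (i + 2) m := by
  show _ ∈ Sset ((i + 1) + 1) m
  rw [Sset, Finset.mem_union]
  right
  exact Sset_base1 i _

/-- the adjacency relation on naturals -/
def Rel0 (k u v : ℕ) : Prop := (u + 1 = v) ∨
    ∃ i < k, ∃ j : ℕ, j + 1 < (3 ^ (k - i) + 1) / 2 ∧ u ∈ Sset i j ∧ v ∈ Sset i (j + 1)

def RelN (k u v : ℕ) : Prop := u ≠ v ∧ (Rel0 k u v ∨ Rel0 k v u)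

theorem RelN_symm {k u v : ℕ} (h : RelN k u v) : RelN k v u := ⟨h.1.symm, h.2.symm⟩

theorem RelN_odd {k x y : ℕ} (h : RelN k (2 * x + 1) (2 * y)) : y = x ∨ y = x + 1 := by
  rcases h with ⟨-, (h | ⟨i, -, j, -, h1, h2⟩) | (h | ⟨i, -, j, -, h1, h2⟩)⟩
  · omega
  · have := Sset_even _ _ _ h1; omega
  · omega
  · have := Sset_even _ _ _ h2; omega

theorem RelN_odd1 (k x : ℕ) : RelN k (2 * x + 1) (2 * x) := ⟨by omega, Or.inr (Or.inl rfl)⟩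
theorem RelN_odd2 (k x : ℕ) : RelN k (2 * x + 1) (2 * (x + 1)) :=
  ⟨by omega, Or.inl (Or.inl (by omega))⟩

/-- nonadjacency of far vertices -/
theorem RelN_far {k l a u v : ℕ} (ha : a % 3 = 2) (hu : 2 * u ∈ Sset l a)
    (hR : RelN k (2 * u) (2 * v)) : u < v + 2 * 3 ^ l ∧ v < u + 2 * 3 ^ l := by
  have key : ∀ q b, 2 * u ∈ Sset q b → 3 ^ q ≤ 3 ^ l := by
    intro q b hb
    by_contra hlt
    push Not at hlt
    have hq : l < q := (Nat.pow_lt_pow_iff_right (by norm_num)).1 hlt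
    obtain ⟨d, rfl⟩ : ∃ d, q = l + d + 1 := ⟨q - l - 1, by omega⟩
    obtain ⟨b', hb', hm⟩ := Sset_down l d b u hb
    have := Sset_inj l a b' u hu hm
    omega
  have ex : ∀ q j : ℕ, 3 ^ q * (j + 1 + 1) = 3 ^ q * j + 2 * 3 ^ q := by intros; ring
  have ex1 : ∀ q j : ℕ, 3 ^ q * (j + 1) = 3 ^ q * j + 3 ^ q := by intros; ring
  rcases hR with ⟨-, (h | ⟨i, -, j, -, h1, h2⟩) | (h | ⟨i, -, j, -, h1, h2⟩)⟩
  · omega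
  · have := key i _ h1
    have b1 := Sset_bounds _ _ _ h1
    have b2 := Sset_bounds _ _ _ h2
    have := ex i j
    have := ex1 i j
    omega
  · omega
  · have := key i _ h2
    have b1 := Sset_bounds _ _ _ h1
    have b2 := Sset_bounds _ _ _ h2
    have := ex i j
    have := ex1 i j
    omega

theorem RelN_of {k l j x y : ℕ} (hl : l < k) (hx : 2 * x ∈ Sset l j) (hy : 2 * y ∈ Sset l (j + 1))
    (hk : 2 * y < 3 ^ k) : RelN k (2 * x) (2 * y) := by
  have b1 := Sset_bounds _ _ _ hx
  have b2 := Sset_bounds _ _ _ hy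
  refine ⟨by omega, Or.inl (Or.inr ⟨l, hl, j, ?_, hx, hy⟩)⟩
  have e : 3 ^ k = 3 ^ l * 3 ^ (k - l) := by rw [← pow_add]; congr 1; omega
  have : 3 ^ l * (2 * (j + 1)) < 3 ^ l * 3 ^ (k - l) := by
    rw [← e]; nlinarith [b2.1]
  have := Nat.lt_of_mul_lt_mul_left this
  omega

/-- The good pair at level `l` around the cut point `z`, unit `s = 3^(l-2)`. -/
def Pair (l z : ℕ) : Prop := ∃ u v a b : ℕ, a % 3 = 2 ∧ (b = a + 1 ∨ a = b + 1) ∧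
  2 * u ∈ Sset (l + 2) a ∧ 2 * v ∈ Sset (l + 2) b ∧
  z ≤ u + 18 * 3 ^ l ∧ u ≤ z + 18 * 3 ^ l ∧ z ≤ v + 18 * 3 ^ l ∧ v ≤ z + 18 * 3 ^ l ∧
  ((u + 3 ^ l ≤ z ∧ z + 3 ^ l ≤ v) ∨ (v + 3 ^ l ≤ z ∧ z + 3 ^ l ≤ u))

theorem pair_good (l z : ℕ) (hz : 9 * 3 ^ l ≤ z)
    (h : ¬ ((z / 3 ^ l / 9) % 3 = 0 ∧ 3 ≤ (z / 3 ^ l) % 9))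
    (h' : ¬ ((z / 3 ^ l / 9) % 3 = 1 ∧ (z / 3 ^ l) % 9 = 0)) : Pair l z := by
  have hs : 0 < 3 ^ l := by positivity
  have hdiv := Nat.div_add_mod z (3 ^ l)
  have hmod := Nat.mod_lt z hs
  have hZ9 : 9 ≤ z / 3 ^ l := (Nat.le_div_iff_mul_le hs).2 hz
  have hp : 3 ^ (l + 2) = 9 * 3 ^ l := by ring
  have hp1 : 3 ^ (l + 1) = 3 * 3 ^ l := by ring
  generalize hZ : z / 3 ^ l = Z at *
  generalize hρ : z % 3 ^ l = ρ at *
  obtain ⟨m, e, he, rfl⟩ : ∃ m e, e < 9 ∧ Z = 9 * m + e :=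
    ⟨Z / 9, Z % 9, Nat.mod_lt _ (by norm_num), by omega⟩
  have e1 : (9 * m + e) / 9 = m := by omega
  have e2 : (9 * m + e) % 9 = e := by omega
  rw [e1, e2] at h h'
  obtain ⟨m, rfl⟩ : ∃ m', m = m' + 1 := ⟨m - 1, by omega⟩
  have B := Sset_base (l + 2)
  have B1 := Sset_base1 (l + 1)
  have B2 := Sset_base2 l
  rw [hp] at B
  rw [hp1] at B1
  generalize 3 ^ l = s at *
  have hc : m % 3 = 0 ∨ m % 3 = 1 ∨ m % 3 = 2 := by omega
  rcases hc with hc | hc | hc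
  · -- dd = 1
    have : 1 ≤ e := by omega
    refine ⟨_, _, m + 2, m + 1, by omega, by omega, B1 (m + 2), B (m + 1), ?_⟩
    have := Nat.mul_le_mul_left s this
    have := Nat.mul_le_mul_left s (Nat.le_of_lt_succ he)
    ring_nf at *
    omega
  · -- dd = 2
    rcases Nat.eq_zero_or_pos e with h0 | h0
    · subst h0
      refine ⟨_, _, m + 1, m, by omega, by omega, B1 (m + 1), B m, ?_⟩
      ring_nf at *
      omega
    · refine ⟨_, _, m + 1, m + 2, by omega, by omega, B (m + 1), B1 (m + 2), ?_⟩
      have := Nat.mul_le_mul_left s h0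
      have := Nat.mul_le_mul_left s (Nat.le_of_lt_succ he)
      ring_nf at *
      omega
  · have h3 : e ≤ 2 := by omega
    refine ⟨_, _, m, m + 1, by omega, by omega, B m, B2 (m + 1), ?_⟩
    have := Nat.mul_le_mul_left s h3
    ring_nf at *
    omega

theorem exists_pair (i z : ℕ) (hz : 81 * 3 ^ i ≤ z) : ∃ l, i ≤ l ∧ l ≤ i + 2 ∧ Pair l z := by
  have hs : 0 < 3 ^ i := by positivity
  have e0 : 3 ^ (i + 1) = 3 ^ i * 3 := by ring
  have e1 : 3 ^ (i + 2) = 3 ^ i * 9 := by ring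
  have g0 := pair_good i z (by omega)
  have g1 := pair_good (i + 1) z (by omega)
  have g2 := pair_good (i + 2) z (by omega)
  rw [e0, ← Nat.div_div_eq_div_mul] at g1
  rw [e1, ← Nat.div_div_eq_div_mul] at g2
  generalize z / 3 ^ i = Z at *
  by_contra hn
  have n0 : ¬ Pair i z := fun h => hn ⟨i, by omega, by omega, h⟩
  have n1 : ¬ Pair (i + 1) z := fun h => hn ⟨i + 1, by omega, by omega, h⟩
  have n2 : ¬ Pair (i + 2) z := fun h => hn ⟨i + 2, by omega, by omega, h⟩
  by_cases a0 : (Z / 9) % 3 = 0 ∧ 3 ≤ Z % 9 <;>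
  by_cases b0 : (Z / 9) % 3 = 1 ∧ Z % 9 = 0 <;>
  by_cases a1 : (Z / 3 / 9) % 3 = 0 ∧ 3 ≤ (Z / 3) % 9 <;>
  by_cases b1 : (Z / 3 / 9) % 3 = 1 ∧ (Z / 3) % 9 = 0 <;>
  by_cases a2 : (Z / 9 / 9) % 3 = 0 ∧ 3 ≤ (Z / 9) % 9 <;>
  by_cases b2 : (Z / 9 / 9) % 3 = 1 ∧ (Z / 9) % 9 = 0 <;>
  first
  | exact n0 (g0 a0 b0)
  | exact n1 (g1 a1 b1)
  | exact n2 (g2 a2 b2)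
  | omega

/-- Window lemma -/
theorem window (col : ℕ → Prop) (N S T : ℕ) (M : Finset ℕ) (h0 : 0 ∈ M) (hN : N ∈ M)
    (hS : 1 ≤ S) (hST : 3 * S ≤ T)
    (hM : ∀ p, p + 1 < N → ¬ (col p ↔ col (p + 1)) → p ∈ M)
    (hgap : ∀ p ∈ M, ∀ p' ∈ M, p + S ≤ p' → p + T ≤ p') (y : ℕ) (hy : y < N)
    (fy : ∀ p ∈ M, p + S ≤ y ∨ y + S ≤ p) :
    ∀ (d x : ℕ), y = x + d → (∀ p ∈ M, p + S ≤ x ∨ x + S ≤ p) → ¬ (col x ↔ col y) →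
    ∃ z, T ≤ z ∧ z + T ≤ N ∧ (∀ w, z < w + T → w + S ≤ z → (col w ↔ col x)) ∧
      (∀ w, z + S ≤ w → w < z + T → (col w ↔ ¬ col x)) := by
  have const : ∀ e a, a + e < N → (∀ p ∈ M, p < a ∨ a + e ≤ p) → (col a ↔ col (a + e)) := by
    intro e
    induction e with
    | zero => intro a _ _; rfl
    | succ e ih =>
      intro a ha h
      rw [ih a (by omega) (fun p hp => by have := h p hp; omega)]
      by_contra hc
      have := h _ (hM (a + e) (by omega) hc)
      omega
  have const' : ∀ a b, a ≤ b → b < N → (∀ p ∈ M, p < a ∨ b ≤ p) → (col a ↔ col b) := by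
    intro a b hab hb h
    obtain ⟨e, rfl⟩ := Nat.exists_eq_add_of_le hab
    exact const e a hb h
  intro d
  induction d using Nat.strong_induction_on with
  | _ d ih =>
  intro x hd fx hxy
  have hex : ∃ p, p ∈ M ∧ x ≤ p := ⟨N, hN, by omega⟩
  classical
  let p := Nat.find hex
  have hp : p ∈ M ∧ x ≤ p := Nat.find_spec hex
  have hmin : ∀ q ∈ M, q < p → q < x := by
    intro q hq hqp
    by_contra hc
    exact Nat.find_min hex hqp ⟨hq, by omega⟩
  clear_value p
  have hpy : p < y := by
    by_contra hc
    apply hxy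
    apply const' x y (by omega) hy
    intro q hq
    by_cases h : q < p
    · left; exact hmin q hq h
    · right; omega
  have f1 := fx p hp.1
  have f2 := fy p hp.1
  have f3 := fx 0 h0
  have f4 := fy N hN
  have g1 := hgap 0 h0 p hp.1 (by omega)
  have g2 := hgap p hp.1 N hN (by omega)
  have left : ∀ w, p < w + T → w + S ≤ p → (col w ↔ col x) := by
    intro w hw1 hw2
    rw [const' w (p - S) (by omega) (by omega), ← const' x (p - S) (by omega) (by omega)]
    · intro q hq
      by_cases h : q < p
      · left; exact hmin q hq h
      · right; omega
    · intro q hq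
      by_cases h : q + S ≤ p
      · have := hgap q hq p hp.1 h
        omega
      · omega
  have right : ∀ w, p + S ≤ w → w < p + T → (col (p + S) ↔ col w) := by
    intro w hw1 hw2
    apply const' _ _ hw1 (by omega)
    intro q hq
    by_cases h : p + S ≤ q
    · have := hgap p hp.1 q hq h
      omega
    · omega
  by_cases hc : col (p + S) ↔ col x
  · have hyT : p + T ≤ y := by
      by_contra hlt
      exact hxy (hc.symm.trans (right y (by omega) (by omega)))
    have hcx := right (p + 2 * S) (by omega) (by omega)
    obtain ⟨z, z1, z2, z3, z4⟩ := ih (y - (p + 2 * S)) (by omega) (p + 2 * S) (by omega)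
      (by
        intro q hq
        by_cases h : p + S ≤ q
        · have := hgap p hp.1 q hq h
          omega
        · omega) (fun h => hxy ((hc.symm.trans hcx).trans h))
    refine ⟨z, z1, z2, fun w a b => ?_, fun w a b => ?_⟩
    · rw [z3 w a b, ← hcx, hc]
    · rw [z4 w a b, ← hcx, hc]
  · refine ⟨p, by omega, by omega, left, fun w a b => ?_⟩
    rw [← right w a b]
    by_cases h1 : col (p + S) <;> by_cases h2 : col x <;> simp_all

theorem window_scale (M : Finset ℕ) (m L : ℕ) (hm : M.card ≤ m) :
    ∃ q ≤ m * m, ∀ p ∈ M, ∀ p' ∈ M, p + 3 ^ (q * L) ≤ p' → p + 3 ^ ((q + 1) * L) ≤ p' := by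
  by_contra hc
  push Not at hc
  have hc' : ∀ q : ℕ, ∃ pp : ℕ × ℕ, q ≤ m * m → pp.1 ∈ M ∧ pp.2 ∈ M ∧
      pp.1 + 3 ^ (q * L) ≤ pp.2 ∧ pp.2 < pp.1 + 3 ^ ((q + 1) * L) := by
    intro q
    by_cases hq : q ≤ m * m
    · obtain ⟨p, hp, p', hp', h1, h2⟩ := hc q hq
      exact ⟨(p, p'), fun _ => ⟨hp, hp', h1, h2⟩⟩
    · exact ⟨(0, 0), fun h => absurd h hq⟩
  choose f hf using hc'
  have hcard : (M ×ˢ M).card < (Finset.range (m * m + 1)).card := by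
    rw [Finset.card_product, Finset.card_range]
    have := Nat.mul_le_mul hm hm
    omega
  obtain ⟨q, hq, q', hq', hne, heq⟩ := Finset.exists_ne_map_eq_of_card_lt_of_maps_to hcard
    (f := f) (by
      intro q hq
      have hq : q ∈ Finset.range (m * m + 1) := hq
      rw [Finset.mem_range] at hq
      have := hf q (by omega)
      simp [this.1, this.2.1])
  rw [Finset.mem_range] at hq hq'
  have key : ∀ a b, a ≤ m * m → b ≤ m * m → a < b → f a = f b → False := by
    intro a b ha hb hab h
    have h1 := hf a ha
    have h2 := hf b hb
    rw [h] at h1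
    have : 3 ^ ((a + 1) * L) ≤ 3 ^ (b * L) :=
      Nat.pow_le_pow_right (by norm_num) (Nat.mul_le_mul_right L hab)
    omega
  rcases Nat.lt_or_gt_of_ne hne with h | h
  · exact key q q' (by omega) (by omega) h heq
  · exact key q' q (by omega) (by omega) h heq.symm

end helpers

section cw

theorem cw_cut {c : ℕ} (θ : ℕ) (hθ : 1 ≤ θ) : ∀ (e : CW c) (W : Set e.Vt), θ < W.ncard →
    ∃ (X : Set e.Vt) (f : e.Vt → Fin c), θ < (X ∩ W).ncard ∧ (X ∩ W).ncard ≤ 2 * θ ∧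
      ∀ a ∈ X, ∀ b ∈ X, f a = f b → e.label a = e.label b ∧ ∀ v, v ∉ X → (e.adj a v ↔ e.adj b v) := by
  have triv : ∀ (e : CW c) (W : Set e.Vt), θ < W.ncard → W.ncard ≤ 2 * θ →
    ∃ (X : Set e.Vt) (f : e.Vt → Fin c), θ < (X ∩ W).ncard ∧ (X ∩ W).ncard ≤ 2 * θ ∧
      ∀ a ∈ X, ∀ b ∈ X, f a = f b → e.label a = e.label b ∧
        ∀ v, v ∉ X → (e.adj a v ↔ e.adj b v) := by
    intro e W h1 h2
    refine ⟨Set.univ, e.label, by simpa using h1, by simpa using h2, ?_⟩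
    intro a _ b _ h
    exact ⟨h, fun v hv => absurd (Set.mem_univ v) hv⟩
  intro e
  induction e with
  | single l =>
    intro W h
    apply triv _ W h
    have : W.ncard ≤ 1 := by
      have hs : W.Subsingleton := by
        intro a _ b _
        rfl
      exact (Set.ncard_le_one hs.finite).2 (fun a ha b hb => hs ha hb)
    omega
  | union a b iha ihb =>
    intro W h
    by_cases h2 : W.ncard ≤ 2 * θ
    · exact triv _ W h h2
    let il : a.Vt → (CW.union a b).Vt := Sum.inl
    let ir : b.Vt → (CW.union a b).Vt := Sum.inr
    have il_inj : Function.Injective il := Sum.inl_injective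
    have ir_inj : Function.Injective ir := Sum.inr_injective
    have hW : W = il '' (il ⁻¹' W) ∪ ir '' (ir ⁻¹' W) := by
      ext v
      constructor
      · intro hv
        rcases v with v | v
        · left; exact ⟨v, hv, rfl⟩
        · right; exact ⟨v, hv, rfl⟩
      · rintro (⟨v, hv, rfl⟩ | ⟨v, hv, rfl⟩)
        · exact hv
        · exact hv
    have hcard : W.ncard ≤ (il ⁻¹' W).ncard + (ir ⁻¹' W).ncard := by
      have := Set.ncard_union_le (il '' (il ⁻¹' W)) (ir '' (ir ⁻¹' W))
      rw [← hW, Set.ncard_image_of_injective _ il_inj, Set.ncard_image_of_injective _ ir_inj] at this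
      exact this
    by_cases hl : θ < (il ⁻¹' W).ncard
    · obtain ⟨X, f, h1, h2, h3⟩ := iha _ hl
      by_cases hX : Nonempty (Fin c)
      swap
      · exact absurd ⟨a.label (Set.nonempty_of_ncard_ne_zero (by omega : (X ∩ il ⁻¹' W).ncard ≠ 0)).some⟩ hX
      obtain ⟨l0⟩ := hX
      have e : il '' X ∩ W = il '' (X ∩ il ⁻¹' W) := (Set.image_inter_preimage il X W).symm
      refine ⟨il '' X, fun v => Sum.elim f (fun _ => l0) (show a.Vt ⊕ b.Vt from v), ?_, ?_, ?_⟩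
      · rw [e, Set.ncard_image_of_injective _ il_inj]; exact h1
      · rw [e, Set.ncard_image_of_injective _ il_inj]; exact h2
      · rintro _ ⟨p, hp, rfl⟩ _ ⟨q, hq, rfl⟩ hpq
        obtain ⟨g1, g2⟩ := h3 p hp q hq hpq
        refine ⟨g1, ?_⟩
        intro v hv
        rcases v with v | v
        · exact g2 v (fun h => hv ⟨v, h, rfl⟩)
        · exact Iff.rfl
    · have hr : θ < (ir ⁻¹' W).ncard := by omega
      obtain ⟨X, f, h1, h2, h3⟩ := ihb _ hr
      by_cases hX : Nonempty (Fin c)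
      swap
      · exact absurd ⟨b.label (Set.nonempty_of_ncard_ne_zero (by omega : (X ∩ ir ⁻¹' W).ncard ≠ 0)).some⟩ hX
      obtain ⟨l0⟩ := hX
      have e : ir '' X ∩ W = ir '' (X ∩ ir ⁻¹' W) := (Set.image_inter_preimage ir X W).symm
      refine ⟨ir '' X, fun v => Sum.elim (fun _ => l0) f (show a.Vt ⊕ b.Vt from v), ?_, ?_, ?_⟩
      · rw [e, Set.ncard_image_of_injective _ ir_inj]; exact h1
      · rw [e, Set.ncard_image_of_injective _ ir_inj]; exact h2
      · rintro _ ⟨p, hp, rfl⟩ _ ⟨q, hq, rfl⟩ hpq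
        obtain ⟨g1, g2⟩ := h3 p hp q hq hpq
        refine ⟨g1, ?_⟩
        intro v hv
        rcases v with v | v
        · exact Iff.rfl
        · exact g2 v (fun h => hv ⟨v, h, rfl⟩)
  | relabel x y a ih =>
    intro W h
    obtain ⟨X, f, h1, h2, h3⟩ := ih W h
    refine ⟨X, f, h1, h2, ?_⟩
    intro p hp q hq hpq
    obtain ⟨g1, g2⟩ := h3 p hp q hq hpq
    refine ⟨?_, g2⟩
    show (if a.label p = x then y else a.label p) = (if a.label q = x then y else a.label q)
    rw [g1]
  | join x y a ih =>
    intro W h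
    obtain ⟨X, f, h1, h2, h3⟩ := ih W h
    refine ⟨X, f, h1, h2, ?_⟩
    intro p hp q hq hpq
    obtain ⟨g1, g2⟩ := h3 p hp q hq hpq
    refine ⟨g1, fun v hv => ?_⟩
    show (a.adj p v ∨ (x ≠ y ∧ ((a.label p = x ∧ a.label v = y) ∨ (a.label p = y ∧ a.label v = x)))) ↔
      (a.adj q v ∨ (x ≠ y ∧ ((a.label q = x ∧ a.label v = y) ∨ (a.label q = y ∧ a.label v = x))))
    rw [g1, g2 v hv]

theorem cw_singles (n : ℕ) : ∀ m : ℕ, ∀ hm : m + 1 ≤ n, ∃ (e : CW n) (φ : Fin (m + 1) ≃ e.Vt),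
    (∀ i, e.label (φ i) = Fin.castLE hm i) ∧ ∀ i j, ¬ e.adj (φ i) (φ j)
  | 0, hm => by
    refine ⟨CW.single (Fin.castLE hm 0), (finOneEquiv : Fin 1 ≃ Unit), ?_, ?_⟩
    · intro i
      have : i = 0 := Fin.ext (by omega)
      subst this
      rfl
    · intro i j h
      exact h
  | m + 1, hm => by
    obtain ⟨e, φ, h1, h2⟩ := cw_singles n m (by omega)
    let ψ : Fin (m + 1) ⊕ Fin 1 ≃ (CW.union e (CW.single (Fin.castLE hm (Fin.last (m + 1))))).Vt :=
      Equiv.sumCongr φ (finOneEquiv : Fin 1 ≃ Unit)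
    refine ⟨CW.union e (CW.single (Fin.castLE hm (Fin.last (m + 1)))),
      (finSumFinEquiv (m := m + 1) (n := 1)).symm.trans ψ, ?_, ?_⟩
    · intro i
      obtain ⟨i, rfl⟩ := (finSumFinEquiv (m := m + 1) (n := 1)).surjective i
      rw [Equiv.trans_apply, Equiv.symm_apply_apply]
      rcases i with i | i
      · show e.label (φ i) = _
        rw [h1]
        apply Fin.ext
        simp
      · show (Fin.castLE hm (Fin.last (m + 1))) = _
        apply Fin.ext
        simp
    · intro i j
      obtain ⟨i, rfl⟩ := (finSumFinEquiv (m := m + 1) (n := 1)).surjective i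
      obtain ⟨j, rfl⟩ := (finSumFinEquiv (m := m + 1) (n := 1)).surjective j
      rw [Equiv.trans_apply, Equiv.symm_apply_apply, Equiv.trans_apply, Equiv.symm_apply_apply]
      rcases i with i | i <;> rcases j with j | j
      · exact h2 i j
      · exact fun h => h
      · exact fun h => h
      · exact fun h => h

theorem cw_exists {n : ℕ} (hn : 1 ≤ n) (G : SimpleGraph (Fin n)) :
    ∃ (e : CW n) (φ : Fin n ≃ e.Vt), ∀ u v, G.Adj u v ↔ e.adj (φ u) (φ v) := by
  obtain ⟨m, rfl⟩ : ∃ m, n = m + 1 := ⟨n - 1, by omega⟩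
  have key : ∀ E : List (Fin (m + 1) × Fin (m + 1)), (∀ p ∈ E, p.1 ≠ p.2) →
      ∃ (e : CW (m + 1)) (φ : Fin (m + 1) ≃ e.Vt), (∀ i, e.label (φ i) = i) ∧
        ∀ u v, e.adj (φ u) (φ v) ↔ ((u, v) ∈ E ∨ (v, u) ∈ E) := by
    intro E
    induction E with
    | nil =>
      intro _
      obtain ⟨e, φ, h1, h2⟩ := cw_singles (m + 1) m le_rfl
      exact ⟨e, φ, fun i => by rw [h1]; rfl, fun u v => by simp [h2]⟩
    | cons p E ih =>
      intro hE
      obtain ⟨e, φ, h1, h2⟩ := ih (fun q hq => hE q (List.mem_cons_of_mem _ hq))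
      refine ⟨CW.join p.1 p.2 e, φ, h1, ?_⟩
      intro u v
      have hne := hE p (List.mem_cons_self)
      show (e.adj (φ u) (φ v) ∨ (p.1 ≠ p.2 ∧ ((e.label (φ u) = p.1 ∧ e.label (φ v) = p.2) ∨
        (e.label (φ u) = p.2 ∧ e.label (φ v) = p.1)))) ↔ _
      rw [h1, h1, h2]
      obtain ⟨p1, p2⟩ := p
      simp only [List.mem_cons, Prod.mk.injEq]
      simp only at hne
      tauto
  classical
  obtain ⟨e, φ, -, h⟩ := key ((Finset.univ.filter (fun p : Fin (m + 1) × Fin (m + 1) =>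
    G.Adj p.1 p.2)).toList) (by
      intro p hp
      simp at hp
      exact hp.ne)
  refine ⟨e, φ, fun u v => ?_⟩
  rw [h]
  simp [G.adj_comm v u]

end cw

section main

theorem tri (r k : ℕ) (X : Set ℕ) (F : ℕ → ℕ) (hF : ∀ a ∈ X, F a < r)
    (hX : ∀ a ∈ X, ∀ b ∈ X, F a = F b → ∀ v < 3 ^ k, v ∉ X → (RelN k a v ↔ RelN k b v))
    (I : Finset ℕ) (u v : ℕ → ℕ) (h1 : ∀ i ∈ I, RelN k (u i) (v i))
    (h2 : ∀ i ∈ I, ∀ j ∈ I, i < j → ¬ RelN k (u i) (v j))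
    (hu : ∀ i ∈ I, u i < 3 ^ k) (hv : ∀ i ∈ I, v i < 3 ^ k)
    (h : (∀ i ∈ I, u i ∈ X ∧ v i ∉ X) ∨ (∀ i ∈ I, u i ∉ X ∧ v i ∈ X)) : I.card ≤ r := by
  rw [← Finset.card_range r]
  rcases h with h | h
  · apply Finset.card_le_card_of_injOn (fun i => F (u i))
    · intro i hi
      simpa using hF _ (h i hi).1
    · have key : ∀ i ∈ I, ∀ j ∈ I, i < j → F (u i) = F (u j) → False := by
        intro i hi j hj hij e
        exact h2 i hi j hj hij
          ((hX _ (h i hi).1 _ (h j hj).1 e (v j) (hv j hj) (h j hj).2).2 (h1 j hj))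
      intro i hi j hj e
      rcases lt_trichotomy i j with h' | h' | h'
      · exact (key i hi j hj h' e).elim
      · exact h'
      · exact (key j hj i hi h' e.symm).elim
  · apply Finset.card_le_card_of_injOn (fun i => F (v i))
    · intro i hi
      simpa using hF _ (h i hi).2
    · have key : ∀ i ∈ I, ∀ j ∈ I, i < j → F (v i) = F (v j) → False := by
        intro i hi j hj hij e
        exact h2 i hi j hj hij (RelN_symm
          ((hX _ (h i hi).2 _ (h j hj).2 e (u i) (hu i hi) (h i hi).1).1 (RelN_symm (h1 i hi))))
      intro i hi j hj e
      rcases lt_trichotomy i j with h' | h' | h'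
      · exact (key i hi j hj h' e).elim
      · exact h'
      · exact (key j hj i hi h' e.symm).elim

open Classical in
theorem crossings (r k N : ℕ) (hN : 2 * N = 3 ^ k + 1) (X : Set ℕ) (F : ℕ → ℕ)
    (hF : ∀ a ∈ X, F a < r)
    (hX : ∀ a ∈ X, ∀ b ∈ X, F a = F b → ∀ v < 3 ^ k, v ∉ X → (RelN k a v ↔ RelN k b v)) :
    ((Finset.range N).filter (fun x => x + 1 < N ∧ ¬ (2 * x ∈ X ↔ 2 * (x + 1) ∈ X))).card
      ≤ 4 * r := by
  set D := (Finset.range N).filter (fun x => x + 1 < N ∧ ¬ (2 * x ∈ X ↔ 2 * (x + 1) ∈ X)) with hD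
  let D1 := D.filter (fun x => 2 * x + 1 ∈ X ∧ 2 * x ∉ X)
  let D2 := D.filter (fun x => 2 * x + 1 ∈ X ∧ 2 * (x + 1) ∉ X)
  let D3 := D.filter (fun x => 2 * x + 1 ∉ X ∧ 2 * x ∈ X)
  let D4 := D.filter (fun x => 2 * x + 1 ∉ X ∧ 2 * (x + 1) ∈ X)
  have bd : ∀ x ∈ D, x + 1 < N := by
    intro x hx
    simp only [hD, Finset.mem_filter] at hx
    exact hx.2.1
  have hsub : D ⊆ (D1 ∪ D2) ∪ (D3 ∪ D4) := by
    intro x hx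
    have hx' := hx
    simp only [hD, Finset.mem_filter] at hx'
    simp only [D1, D2, D3, D4, Finset.mem_union, Finset.mem_filter, hx, true_and]
    have := hx'.2.2
    by_cases a : 2 * x + 1 ∈ X <;> by_cases b : 2 * x ∈ X <;>
      by_cases c : 2 * (x + 1) ∈ X <;> simp_all
  have c1 : D1.card ≤ r := by
    apply tri r k X F hF hX D1 (fun x => 2 * x) (fun x => 2 * x + 1)
    · intro i hi; exact RelN_symm (RelN_odd1 k i)
    · intro i hi j hj hij hc
      have := RelN_odd (RelN_symm hc)
      omega
    · intro i hi; have := bd i (Finset.mem_filter.1 hi).1; omega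
    · intro i hi; have := bd i (Finset.mem_filter.1 hi).1; omega
    · right; intro i hi; exact (Finset.mem_filter.1 hi).2.symm
  have c3 : D3.card ≤ r := by
    apply tri r k X F hF hX D3 (fun x => 2 * x) (fun x => 2 * x + 1)
    · intro i hi; exact RelN_symm (RelN_odd1 k i)
    · intro i hi j hj hij hc
      have := RelN_odd (RelN_symm hc)
      omega
    · intro i hi; have := bd i (Finset.mem_filter.1 hi).1; omega
    · intro i hi; have := bd i (Finset.mem_filter.1 hi).1; omega
    · left; intro i hi; exact (Finset.mem_filter.1 hi).2.symm
  have c2 : D2.card ≤ r := by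
    apply tri r k X F hF hX D2 (fun x => 2 * x + 1) (fun x => 2 * (x + 1))
    · intro i hi; exact RelN_odd2 k i
    · intro i hi j hj hij hc
      have := RelN_odd hc
      omega
    · intro i hi; have := bd i (Finset.mem_filter.1 hi).1; omega
    · intro i hi; have := bd i (Finset.mem_filter.1 hi).1; omega
    · left; intro i hi; exact (Finset.mem_filter.1 hi).2
  have c4 : D4.card ≤ r := by
    apply tri r k X F hF hX D4 (fun x => 2 * x + 1) (fun x => 2 * (x + 1))
    · intro i hi; exact RelN_odd2 k i
    · intro i hi j hj hij hc
      have := RelN_odd hc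
      omega
    · intro i hi; have := bd i (Finset.mem_filter.1 hi).1; omega
    · intro i hi; have := bd i (Finset.mem_filter.1 hi).1; omega
    · right; intro i hi; exact (Finset.mem_filter.1 hi).2
  have := Finset.card_le_card hsub
  have := Finset.card_union_le (D1 ∪ D2) (D3 ∪ D4)
  have := Finset.card_union_le D1 D2
  have := Finset.card_union_le D3 D4
  omega

theorem exists_far (M W : Finset ℕ) (S m : ℕ) (hm : M.card ≤ m)
    (hW : m * (2 * S) < W.card) : ∃ x ∈ W, ∀ p ∈ M, p + S ≤ x ∨ x + S ≤ p := by
  by_contra hc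
  push Not at hc
  have hsub : W ⊆ M.biUnion (fun p => Finset.Ico (p - S) (p + S)) := by
    intro x hx
    obtain ⟨p, hp, h1, h2⟩ := hc x hx
    rw [Finset.mem_biUnion]
    exact ⟨p, hp, by rw [Finset.mem_Ico]; omega⟩
  have h1 := Finset.card_le_card hsub
  have h2 := Finset.card_biUnion_le_card_mul M (fun p => Finset.Ico (p - S) (p + S)) (2 * S)
    (by intro p _; rw [Nat.card_Ico]; omega)
  have h3 := Nat.mul_le_mul_right (2 * S) hm
  omega

/-- Contradiction from a window. -/
theorem window_absurd (r k t N z : ℕ) (hN : 2 * N = 3 ^ k + 1) (X : Set ℕ) (F : ℕ → ℕ)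
    (hF : ∀ a ∈ X, F a < r)
    (hX : ∀ a ∈ X, ∀ b ∈ X, F a = F b → ∀ v < 3 ^ k, v ∉ X → (RelN k a v ↔ RelN k b v))
    (ht : t + (12 * r + 6) ≤ k)
    (hz1 : 3 ^ (t + (12 * r + 6)) ≤ z) (hz2 : z + 3 ^ (t + (12 * r + 6)) ≤ N) (P : Prop)
    (hl : ∀ w, z < w + 3 ^ (t + (12 * r + 6)) → w + 3 ^ t ≤ z → (2 * w ∈ X ↔ P))
    (hr : ∀ w, z + 3 ^ t ≤ w → w < z + 3 ^ (t + (12 * r + 6)) → (2 * w ∈ X ↔ ¬ P)) : False := by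
  classical
  have data : ∀ q : ℕ, ∃ l u v a b : ℕ, q < 2 * r + 1 → (t + 6 * q ≤ l ∧ l ≤ t + 6 * q + 2 ∧
      a % 3 = 2 ∧ (b = a + 1 ∨ a = b + 1) ∧
      2 * u ∈ Sset (l + 2) a ∧ 2 * v ∈ Sset (l + 2) b ∧
      z < u + 3 ^ (t + (12 * r + 6)) ∧ u < z + 3 ^ (t + (12 * r + 6)) ∧
      z < v + 3 ^ (t + (12 * r + 6)) ∧ v < z + 3 ^ (t + (12 * r + 6)) ∧
      ((u + 3 ^ l ≤ z ∧ z + 3 ^ l ≤ v) ∨ (v + 3 ^ l ≤ z ∧ z + 3 ^ l ≤ u))) := by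
    intro q
    by_cases hq : q < 2 * r + 1
    · obtain ⟨l, l1, l2, u, v, a, b, h1, h2, h3, h4, h5, h6, h7, h8, h9⟩ :=
        exists_pair (t + 6 * q) z (by
          have : 3 ^ (t + 6 * q + 4) ≤ 3 ^ (t + (12 * r + 6)) :=
            Nat.pow_le_pow_right (by norm_num) (by omega)
          have e : 3 ^ (t + 6 * q + 4) = 81 * 3 ^ (t + 6 * q) := by ring
          omega)
      have hp : 3 ^ (l + 3) ≤ 3 ^ (t + (12 * r + 6)) :=
        Nat.pow_le_pow_right (by norm_num) (by omega)
      have e : 3 ^ (l + 3) = 27 * 3 ^ l := by ring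
      have : 0 < 3 ^ l := by positivity
      exact ⟨l, u, v, a, b, fun _ => ⟨l1, l2, h1, h2, h3, h4, by omega, by omega, by omega,
        by omega, h9⟩⟩
    · exact ⟨0, 0, 0, 0, 0, fun h => absurd h hq⟩
  choose l u v a b hd using data
  let I := Finset.range (2 * r + 1)
  let I1 := I.filter (fun q => u q < v q)
  let I2 := I.filter (fun q => ¬ u q < v q)
  have hcard : I1.card + I2.card = 2 * r + 1 := by
    have := Finset.card_filter_add_card_filter_not (s := I) (fun q => u q < v q)
    simpa [I, I1, I2] using this
  have hpos : ∀ q, 0 < 3 ^ l q := fun q => by positivity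
  have hadj : ∀ q < 2 * r + 1, RelN k (2 * u q) (2 * v q) := by
    intro q hq
    obtain ⟨l1, l2, h1, h2, h3, h4, h5, h6, h7, h8, h9⟩ := hd q hq
    rcases h2 with h2 | h2
    · rw [h2] at h4
      exact RelN_of (by omega) h3 h4 (by omega)
    · rw [h2] at h3
      exact RelN_symm (RelN_of (by omega) h4 h3 (by omega))
  have hnon : ∀ q < 2 * r + 1, ∀ q' < 2 * r + 1, q < q' → (u q < v q ↔ u q' < v q') →
      ¬ RelN k (2 * u q) (2 * v q') := by
    intro q hq q' hq' hlt hside hR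
    obtain ⟨l1, l2, h1, h2, h3, h4, h5, h6, h7, h8, h9⟩ := hd q hq
    obtain ⟨l1', l2', h1', h2', h3', h4', h5', h6', h7', h8', h9'⟩ := hd q' hq'
    have f := RelN_far h1 h3 hR
    have : 3 ^ (l q + 3) ≤ 3 ^ l q' := Nat.pow_le_pow_right (by norm_num) (by omega)
    have e : 3 ^ (l q + 3) = 27 * 3 ^ l q := by ring
    have e2 : 3 ^ (l q + 2) = 9 * 3 ^ l q := by ring
    have := hpos q
    have := hpos q'
    omega
  have hple : ∀ q < 2 * r + 1, 3 ^ t ≤ 3 ^ l q := fun q hq =>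
    Nat.pow_le_pow_right (by norm_num) (by have := hd q hq; omega)
  have b1 : I1.card ≤ r := by
    have hm : ∀ q ∈ I1, q < 2 * r + 1 ∧ u q < v q := by
      intro q hq
      simpa [I1, I] using hq
    apply tri r k X F hF hX I1 (fun q => 2 * u q) (fun q => 2 * v q)
    · exact fun q hq => hadj q (hm q hq).1
    · intro q hq q' hq' hlt
      exact hnon q (hm q hq).1 q' (hm q' hq').1 hlt (by simp [(hm q hq).2, (hm q' hq').2])
    · intro q hq; have := hd q (hm q hq).1; show 2 * u q < 3 ^ k; omega
    · intro q hq; have := hd q (hm q hq).1; show 2 * v q < 3 ^ k; omega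
    · have sides : ∀ q ∈ I1, (2 * u q ∈ X ↔ P) ∧ (2 * v q ∈ X ↔ ¬ P) := by
        intro q hq
        obtain ⟨l1, l2, h1, h2, h3, h4, h5, h6, h7, h8, h9⟩ := hd q (hm q hq).1
        have := hple q (hm q hq).1
        have := (hm q hq).2
        have := hpos q
        exact ⟨hl _ (by omega) (by omega), hr _ (by omega) (by omega)⟩
      by_cases hP : P
      · left; intro q hq; have := sides q hq; simpa [hP] using this
      · right; intro q hq; have := sides q hq; simpa [hP] using this
  have b2 : I2.card ≤ r := by
    have hm : ∀ q ∈ I2, q < 2 * r + 1 ∧ ¬ u q < v q := by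
      intro q hq
      simpa [I2, I] using hq
    apply tri r k X F hF hX I2 (fun q => 2 * u q) (fun q => 2 * v q)
    · exact fun q hq => hadj q (hm q hq).1
    · intro q hq q' hq' hlt
      exact hnon q (hm q hq).1 q' (hm q' hq').1 hlt
        ⟨fun h => absurd h (hm q hq).2, fun h => absurd h (hm q' hq').2⟩
    · intro q hq; have := hd q (hm q hq).1; show 2 * u q < 3 ^ k; omega
    · intro q hq; have := hd q (hm q hq).1; show 2 * v q < 3 ^ k; omega
    · have sides : ∀ q ∈ I2, (2 * v q ∈ X ↔ P) ∧ (2 * u q ∈ X ↔ ¬ P) := by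
        intro q hq
        obtain ⟨l1, l2, h1, h2, h3, h4, h5, h6, h7, h8, h9⟩ := hd q (hm q hq).1
        have := hple q (hm q hq).1
        have := (hm q hq).2
        have := hpos q
        exact ⟨hl _ (by omega) (by omega), hr _ (by omega) (by omega)⟩
      by_cases hP : P
      · right; intro q hq; have := sides q hq; simpa [hP, and_comm] using this
      · left; intro q hq; have := sides q hq; simpa [hP, and_comm] using this
  omega

def bigK (r : ℕ) : ℕ :=
  ((4 * r + 2) * (4 * r + 2) + 1) * (12 * r + 6) + (4 * r + 2) + 2

open Classical in
theorem core (r k N : ℕ) (hk : k = bigK r) (hN : 2 * N = 3 ^ k + 1) (X : Set ℕ) (F : ℕ → ℕ)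
    (hF : ∀ a ∈ X, F a < r)
    (hX : ∀ a ∈ X, ∀ b ∈ X, F a = F b → ∀ v < 3 ^ k, v ∉ X → (RelN k a v ↔ RelN k b v))
    (hw1 : 3 ^ (k - 2) < ((Finset.range N).filter (fun x => 2 * x ∈ X)).card)
    (hw2 : ((Finset.range N).filter (fun x => 2 * x ∈ X)).card ≤ 2 * 3 ^ (k - 2)) : False := by
  have hc := crossings r k N hN X F hF hX
  set D := (Finset.range N).filter (fun x => x + 1 < N ∧ ¬ (2 * x ∈ X ↔ 2 * (x + 1) ∈ X)) with hD
  let M := insert 0 (insert N D)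
  have hM : M.card ≤ 4 * r + 2 := by
    have h1 := Finset.card_insert_le 0 (insert N D)
    have h2 := Finset.card_insert_le N D
    show (insert 0 (insert N D)).card ≤ _
    omega
  obtain ⟨q, hq, hgap⟩ := window_scale M (4 * r + 2) (12 * r + 6) hM
  have hqL : q * (12 * r + 6) ≤ (4 * r + 2) * (4 * r + 2) * (12 * r + 6) :=
    Nat.mul_le_mul_right _ hq
  have hk' : k = (4 * r + 2) * (4 * r + 2) * (12 * r + 6) + (12 * r + 6) + (4 * r + 2) + 2 := by
    rw [hk, bigK]; ring
  have hq1 : (q + 1) * (12 * r + 6) = q * (12 * r + 6) + (12 * r + 6) := by ring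
  rw [hq1] at hgap
  generalize q * (12 * r + 6) = t at *
  generalize (4 * r + 2) * (4 * r + 2) * (12 * r + 6) = A at *
  have hS : 1 ≤ 3 ^ t := Nat.one_le_pow _ _ (by norm_num)
  have hsmall : (4 * r + 2) * (2 * 3 ^ t) ≤ 3 ^ (k - 2) := by
    have h1 : 3 ^ (t + 1 + (4 * r + 2)) ≤ 3 ^ (k - 2) :=
      Nat.pow_le_pow_right (by norm_num) (by omega)
    have h2 : 4 * r + 2 ≤ 3 ^ (4 * r + 2) := (Nat.lt_pow_self (by norm_num)).le
    have h3 : 3 ^ (t + 1 + (4 * r + 2)) = 3 ^ (4 * r + 2) * (3 * 3 ^ t) := by ring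
    have h4 := Nat.mul_le_mul h2 (show 2 * 3 ^ t ≤ 3 * 3 ^ t by omega)
    omega
  have hcompl := Finset.card_filter_add_card_filter_not (s := Finset.range N) (fun x => 2 * x ∈ X)
  rw [Finset.card_range] at hcompl
  have hk9 : 3 ^ k = 9 * 3 ^ (k - 2) := by
    have : k = (k - 2) + 2 := by omega
    conv_lhs => rw [this]
    ring
  obtain ⟨x, hx, fx⟩ := exists_far M ((Finset.range N).filter (fun x => 2 * x ∈ X)) (3 ^ t)
    (4 * r + 2) hM (by omega)
  obtain ⟨y, hy, fy⟩ := exists_far M ((Finset.range N).filter (fun x => ¬ 2 * x ∈ X)) (3 ^ t)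
    (4 * r + 2) hM (by omega)
  rw [Finset.mem_filter, Finset.mem_range] at hx hy
  have h3 : 3 * 3 ^ t ≤ 3 ^ (t + (12 * r + 6)) := by
    have : 3 ^ (t + 1) ≤ 3 ^ (t + (12 * r + 6)) := Nat.pow_le_pow_right (by norm_num) (by omega)
    have e : 3 ^ (t + 1) = 3 * 3 ^ t := by ring
    omega
  have hMD : ∀ p, p + 1 < N → ¬ (2 * p ∈ X ↔ 2 * (p + 1) ∈ X) → p ∈ M := by
    intro p hp h
    simp only [M, Finset.mem_insert, hD, Finset.mem_filter, Finset.mem_range]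
    right; right
    exact ⟨by omega, hp, h⟩
  have fin : ∀ x y, x < y → y < N → (∀ p ∈ M, p + 3 ^ t ≤ x ∨ x + 3 ^ t ≤ p) →
      (∀ p ∈ M, p + 3 ^ t ≤ y ∨ y + 3 ^ t ≤ p) → ¬ (2 * x ∈ X ↔ 2 * y ∈ X) → False := by
    intro x y hxy hy fx fy hne
    obtain ⟨z, z1, z2, z3, z4⟩ := window (fun x => 2 * x ∈ X) N (3 ^ t) (3 ^ (t + (12 * r + 6))) M
      (by simp [M]) (by simp [M]) hS h3 hMD hgap y hy fy (y - x) x (by omega) fx hne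
    exact window_absurd r k t N z hN X F hF hX (by omega) z1 z2 _ z3 z4
  rcases lt_trichotomy x y with h | h | h
  · exact fin x y h hy.1 fx fy (fun h' => hy.2 (h'.1 hx.2))
  · subst h; exact hy.2 hx.2
  · exact fin y x h hx.1 fy fx (fun h' => hy.2 (h'.2 hx.2))

theorem Gk_adj (k : ℕ) (u v : Fin (3 ^ k)) : (Gk k).Adj u v ↔ RelN k u v := by
  rw [Gk, SimpleGraph.fromRel_adj, RelN, ne_eq, ne_eq, Fin.ext_iff]
  rfl

open Classical in
theorem no_expr (r c : ℕ) (hc : c ≤ r) (e : CW c) (φ : Fin (3 ^ bigK r) ≃ e.Vt)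
    (h : ∀ u v, (Gk (bigK r)).Adj u v ↔ e.adj (φ u) (φ v)) : False := by
  generalize hk : bigK r = k at *
  have hk2 : 2 ≤ k := by rw [← hk, bigK]; omega
  obtain ⟨N, hN⟩ : ∃ N, 2 * N = 3 ^ k + 1 := by
    have : Odd (3 ^ k) := Odd.pow (by decide)
    obtain ⟨m, hm⟩ := this
    exact ⟨m + 1, by omega⟩
  have hk9 : 3 ^ k = 9 * 3 ^ (k - 2) := by
    have : k = (k - 2) + 2 := by omega
    conv_lhs => rw [this]
    ring
  have hpos : 1 ≤ 3 ^ (k - 2) := Nat.one_le_pow _ _ (by norm_num)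
  -- the embedding of half-indices
  let g : ℕ → e.Vt := fun x => φ ⟨(2 * x) % 3 ^ k, Nat.mod_lt _ (by positivity)⟩
  have hg : ∀ x (hx : x < N), g x = φ ⟨2 * x, by omega⟩ := by
    intro x hx
    have : (2 * x) % 3 ^ k = 2 * x := Nat.mod_eq_of_lt (by omega)
    simp only [g, this]
  have ginj : Set.InjOn g (Set.Iio N) := by
    intro x hx y hy hxy
    rw [hg x hx, hg y hy] at hxy
    have := φ.injective hxy
    rw [Fin.mk.injEq] at this
    omega
  let W : Set e.Vt := g '' (Set.Iio N)
  have hWc : W.ncard = N := by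
    rw [Set.ncard_image_of_injOn ginj]
    have : (Set.Iio N) = ((Finset.range N : Finset ℕ) : Set ℕ) := by ext; simp
    rw [this, Set.ncard_coe_finset, Finset.card_range]
  obtain ⟨Y, f, h1, h2, h3⟩ := cw_cut (3 ^ (k - 2)) hpos e W (by omega)
  let X : Set ℕ := {v | ∃ hv : v < 3 ^ k, φ ⟨v, hv⟩ ∈ Y}
  let F : ℕ → ℕ := fun v => if hv : v < 3 ^ k then (f (φ ⟨v, hv⟩) : ℕ) else 0
  have hcard : (Y ∩ W).ncard = ((Finset.range N).filter (fun x => 2 * x ∈ X)).card := by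
    have : Y ∩ W = g '' (((Finset.range N).filter (fun x => 2 * x ∈ X) : Finset ℕ) : Set ℕ) := by
      ext y
      constructor
      · rintro ⟨hy, x, hx, rfl⟩
        have hx' : x < N := hx
        refine ⟨x, ?_, rfl⟩
        rw [hg x hx] at hy
        simp only [Finset.coe_filter, Finset.mem_range, Set.mem_setOf_eq]
        exact ⟨hx, by omega, hy⟩
      · rintro ⟨x, hx, rfl⟩
        simp only [Finset.coe_filter, Finset.mem_range, Set.mem_setOf_eq] at hx
        obtain ⟨hx, hlt, hy⟩ := hx
        refine ⟨?_, x, hx, rfl⟩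
        rw [hg x hx]
        exact hy
    rw [this, Set.ncard_image_of_injOn, Set.ncard_coe_finset]
    apply ginj.mono
    intro x hx
    simp only [Finset.coe_filter, Finset.mem_range, Set.mem_setOf_eq] at hx
    exact hx.1
  rw [hcard] at h1 h2
  refine core r k N hk.symm hN X F ?_ ?_ (by convert h1) (by convert h2)
  · rintro a ⟨ha, -⟩
    simp only [F, ha, dif_pos]
    have := (f (φ ⟨a, ha⟩)).isLt
    omega
  · rintro a ⟨ha, haY⟩ b ⟨hb, hbY⟩ hab v hv hvX
    simp only [F, ha, hb, dif_pos] at hab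
    have hvY : φ ⟨v, hv⟩ ∉ Y := fun hh => hvX ⟨hv, hh⟩
    have := (h3 _ haY _ hbY (Fin.ext hab)).2 _ hvY
    rw [← h, ← h, Gk_adj, Gk_adj] at this
    exact this

end main

/-- The graphs `G_k` have unbounded clique-width: for every
natural number `r` there exists `k ≥ 1` such that the clique-width of `G_k` is
strictly greater than `r`. -/
theorem stmt_11 (r : ℕ) : ∃ k : ℕ, 1 ≤ k ∧ r < cliqueWidth (Gk k) := by
  refine ⟨bigK r, by rw [bigK]; omega, ?_⟩
  have hne : {c : ℕ | ∃ (e : CW c) (φ : Fin (3 ^ bigK r) ≃ e.Vt),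
      ∀ u v, (Gk (bigK r)).Adj u v ↔ e.adj (φ u) (φ v)}.Nonempty :=
    ⟨_, cw_exists (Nat.one_le_pow _ _ (by norm_num)) (Gk (bigK r))⟩
  by_contra hlt
  obtain ⟨e, φ, h⟩ := Nat.sInf_mem hne
  exact no_expr r _ (not_lt.1 hlt) e φ h
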